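/- arXiv:2208.11768 — 9 statements merged into one kernel-verified Lean document; each statement's English description precedes it below -/
import Mathlib

section
/- Let A be a finite alphabet, let F ⊆ A* be a uniformly recurrent language, and let X ⊆ F be a finite F-complete bifix code. If the complete bifix decoding δ⁻¹(F) of F by X is a recurrent language over the alphabet X, then δ⁻¹(F) is uniformly recurrent over the alphabet X. -/
/-- A language is factorial if it is closed under taking factors (infixes). -/
def Factorial {A : Type*} (F : Set (List A)) : Prop :=
  ∀ u w : List A, w ∈ F → u <:+: w → u ∈ F

/-- A language is prolongable if every word extends by a letter on both sides. -/
def Prolongable {A : Type*} (F : Set (List A)) : Prop :=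
  ∀ u ∈ F, ∃ a b : A, (a :: u) ∈ F ∧ (u ++ [b]) ∈ F

/-- A subshift language: nonempty, factorial and prolongable. -/
def SubshiftLanguage {A : Type*} (F : Set (List A)) : Prop :=
  F.Nonempty ∧ Factorial F ∧ Prolongable F

/-- A recurrent language. -/
def Recurrent {A : Type*} (F : Set (List A)) : Prop :=
  SubshiftLanguage F ∧ ∀ u ∈ F, ∀ v ∈ F, ∃ w : List A, u ++ w ++ v ∈ F

/-- A uniformly recurrent language. -/
def UniformlyRecurrent {A : Type*} (F : Set (List A)) : Prop :=
  SubshiftLanguage F ∧ ∀ u ∈ F, ∃ N : ℕ, ∀ w ∈ F, N ≤ w.length → u <:+: w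

/-- The Kleene star of a set of words: all concatenations of finitely many elements. -/
def KStarSet {A : Type*} (X : Set (List A)) : Set (List A) :=
  {w | ∃ l : List (List A), (∀ x ∈ l, x ∈ X) ∧ w = l.flatten}

/-- A code: a nonempty set of nonempty words with unique factorization. -/
def IsCode {A : Type*} (X : Set (List A)) : Prop :=
  X.Nonempty ∧ (∀ x ∈ X, x ≠ []) ∧
    ∀ l m : List (List A), (∀ x ∈ l, x ∈ X) → (∀ y ∈ m, y ∈ X) →
      l.flatten = m.flatten → l = m

/-- A prefix code: a nonempty set of nonempty words, none a proper prefix of another. -/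
def PrefixCode {A : Type*} (X : Set (List A)) : Prop :=
  X.Nonempty ∧ (∀ x ∈ X, x ≠ []) ∧ ∀ x ∈ X, ∀ y ∈ X, x <+: y → x = y

/-- A suffix code: a nonempty set of nonempty words, none a proper suffix of another. -/
def SuffixCode {A : Type*} (X : Set (List A)) : Prop :=
  X.Nonempty ∧ (∀ x ∈ X, x ≠ []) ∧ ∀ x ∈ X, ∀ y ∈ X, x <:+ y → x = y

/-- A bifix code is both a prefix code and a suffix code. -/
def BifixCode {A : Type*} (X : Set (List A)) : Prop :=
  PrefixCode X ∧ SuffixCode X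

/-- `X` is right `F`-complete: every element of `F` is a prefix of an element of `X*`. -/
def RightFComplete {A : Type*} (X F : Set (List A)) : Prop :=
  ∀ u ∈ F, ∃ w ∈ KStarSet X, u <+: w

/-- `X` is left `F`-complete: every element of `F` is a suffix of an element of `X*`. -/
def LeftFComplete {A : Type*} (X F : Set (List A)) : Prop :=
  ∀ u ∈ F, ∃ w ∈ KStarSet X, u <:+ w

/-- `X` is `F`-complete: both right and left `F`-complete. -/
def FComplete {A : Type*} (X F : Set (List A)) : Prop :=
  RightFComplete X F ∧ LeftFComplete X F

/-- The decoding map: a word over the alphabet `X` is sent to its concatenation in `A*`. -/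
def decode {A : Type*} (X : Set (List A)) : List ↥X → List A :=
  fun l => (l.map Subtype.val).flatten

/-- A language is rational if it is accepted by a DFA with finitely many states. -/
def IsRational {A : Type*} (L : Set (List A)) : Prop :=
  ∃ (σ : Type) (_ : Fintype σ) (M : DFA A σ), ∀ w : List A, w ∈ M.accepts ↔ w ∈ L

/-!
For a fixed word `u` over `X`, consider occurrences of `δ(u)` in a word `w ∈ F` such that no two of
their starting points delimit an element of `X*`. Right completeness lets one parse `w` to the
right from each starting point until a remainder is left that is no longer than the longest word
of `X`; as `X` is a suffix code, distinct points have remainders of distinct lengths, so the number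
of such occurrences is bounded independently of `w`.

If arbitrarily long `v ∈ δ⁻¹(F)` avoid `u`, this number can nevertheless always be increased: by
uniform recurrence `w` is a factor of `δ(v)` for such a `v`, and by recurrence `v t u ∈ δ⁻¹(F)` for
some `t`. The occurrence of `δ(u)` at the end of `δ(v t u)` can be added to those in `w`, because
an element of `X*` separating it from one of them would make `u` a factor of `v`.
-/

section Decoding

variable {A : Type*} {X : Set (List A)}

@[simp]
theorem decode_nil : decode X [] = [] := rfl

@[simp]
theorem decode_cons (x : X) (a : List X) : decode X (x :: a) = x.1 ++ decode X a := rfl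

@[simp]
theorem decode_append (a b : List X) : decode X (a ++ b) = decode X a ++ decode X b := by
  simp only [decode, List.map_append, List.flatten_append]

theorem exists_decode_eq_of_mem_kStarSet {w : List A} (hw : w ∈ KStarSet X) :
    ∃ a, decode X a = w := by
  obtain ⟨l, hl, rfl⟩ := hw
  lift l to List X using hl
  exact ⟨l, rfl⟩

theorem length_le_length_decode (hX : ∀ x ∈ X, x ≠ []) (a : List X) :
    a.length ≤ (decode X a).length := by
  induction a with
  | nil => exact Nat.zero_le _
  | cons x a ih =>
    have hx : 0 < x.1.length := List.length_pos_iff.2 (hX x.1 x.2)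
    simp only [List.length_cons, decode_cons, List.length_append]
    omega

theorem PrefixCode.eq_of_prefix_of_prefix (hX : PrefixCode X) {x y : X} {w : List A}
    (hx : x.1 <+: w) (hy : y.1 <+: w) : x = y :=
  (List.prefix_or_prefix_of_prefix hx hy).elim (fun h => Subtype.ext (hX.2.2 _ x.2 _ y.2 h))
    fun h => Subtype.ext (hX.2.2 _ y.2 _ x.2 h).symm

theorem SuffixCode.eq_of_suffix_of_suffix (hX : SuffixCode X) {x y : X} {w : List A}
    (hx : x.1 <:+ w) (hy : y.1 <:+ w) : x = y :=
  (List.suffix_or_suffix_of_suffix hx hy).elim (fun h => Subtype.ext (hX.2.2 _ x.2 _ y.2 h))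
    fun h => Subtype.ext (hX.2.2 _ y.2 _ x.2 h).symm

theorem prefix_of_decode_prefix_decode (hX : PrefixCode X) {a b : List X}
    (h : decode X a <+: decode X b) : a <+: b := by
  induction a generalizing b with
  | nil => exact List.nil_prefix
  | cons x a ih =>
    cases b with
    | nil =>
      have hx : x.1 = [] := List.prefix_nil.1 ((List.prefix_append _ _).trans h)
      exact absurd hx (hX.2.1 x.1 x.2)
    | cons y b =>
      obtain rfl : x = y :=
        hX.eq_of_prefix_of_prefix ((List.prefix_append _ _).trans h) (List.prefix_append _ _)
      exact (List.prefix_cons_inj x).2 (ih ((List.prefix_append_right_inj x.1).1 h))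

theorem exists_eq_decode_append_of_prefix_decode {L : ℕ} (hL : ∀ x ∈ X, x.length ≤ L)
    {a : List X} {s : List A} (h : s <+: decode X a) :
    ∃ c r, s = decode X c ++ r ∧ r.length ≤ L := by
  induction a generalizing s with
  | nil => exact ⟨[], [], List.prefix_nil.1 h, Nat.zero_le L⟩
  | cons x a ih =>
    rcases List.prefix_or_prefix_of_prefix h (List.prefix_append x.1 _) with hs | ⟨t, rfl⟩
    · exact ⟨[], s, rfl, hs.length_le.trans (hL x.1 x.2)⟩
    · obtain ⟨c, r, rfl, hr⟩ := ih ((List.prefix_append_right_inj x.1).1 h)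
      exact ⟨x :: c, r, by rw [decode_cons, List.append_assoc], hr⟩

theorem RightFComplete.exists_eq_decode_append {F : Set (List A)} (hX : RightFComplete X F)
    {L : ℕ} (hL : ∀ x ∈ X, x.length ≤ L) {s : List A} (hs : s ∈ F) :
    ∃ c r, s = decode X c ++ r ∧ r.length ≤ L := by
  obtain ⟨w, hw, hsw⟩ := hX s hs
  obtain ⟨a, rfl⟩ := exists_decode_eq_of_mem_kStarSet hw
  exact exists_eq_decode_append_of_prefix_decode hL hsw

end Decoding

/-- `CodePrefix X p q` means `q ∈ p X*`. For two prefixes of a word, seen as two positions in it,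
it says that the factor between these positions lies in `X*`. -/
def CodePrefix {A : Type*} (X : Set (List A)) (p q : List A) : Prop :=
  ∃ c : List X, p ++ decode X c = q

namespace CodePrefix

variable {A : Type*} {X : Set (List A)} {p q w : List A}

theorem refl (X : Set (List A)) (p : List A) : CodePrefix X p p :=
  ⟨[], List.append_nil p⟩

theorem isPrefix (h : CodePrefix X p q) : p <+: q :=
  h.imp' (decode X) fun _ hc => hc

theorem of_append_left (h : CodePrefix X (w ++ p) (w ++ q)) : CodePrefix X p q := by
  obtain ⟨c, hc⟩ := h
  exact ⟨c, List.append_cancel_left ((List.append_assoc _ _ _).symm.trans hc)⟩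

theorem or_of_codePrefix (hX : SuffixCode X) (hp : CodePrefix X p w) (hq : CodePrefix X q w) :
    CodePrefix X p q ∨ CodePrefix X q p := by
  obtain ⟨a, rfl⟩ := hp
  obtain ⟨b, hab⟩ := hq
  induction a using List.reverseRecOn generalizing b with
  | nil => exact .inr ⟨b, hab.trans (List.append_nil p)⟩
  | append_singleton a x ih =>
    cases b using List.reverseRecOn with
    | nil => exact .inl ⟨a ++ [x], hab.symm.trans (List.append_nil q)⟩
    | append_singleton b y =>
      simp only [decode_append, decode_cons, decode_nil, List.append_nil,
        ← List.append_assoc] at hab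
      obtain rfl : x = y := hX.eq_of_suffix_of_suffix ⟨_, rfl⟩ ⟨_, hab⟩
      exact ih b (List.append_cancel_right hab)

theorem exists_decode_eq (hX : SuffixCode X) {a : List X} (h : CodePrefix X p (decode X a)) :
    ∃ c, decode X c = p := by
  rcases or_of_codePrefix hX (p := []) ⟨a, rfl⟩ h with hp | hp
  · exact hp
  · exact ⟨[], (List.prefix_nil.1 hp.isPrefix).symm⟩

theorem infix_of_decode_occurrence (hX : BifixCode X) {a u v : List X}
    (h : CodePrefix X p (decode X a)) (hpu : p ++ decode X u <+: decode X v) : u <:+: v := by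
  obtain ⟨c, rfl⟩ := h.exists_decode_eq hX.2
  rw [← decode_append] at hpu
  exact (List.suffix_append c u).isInfix.trans (prefix_of_decode_prefix_decode hX.1 hpu).isInfix

end CodePrefix

theorem card_le_of_isAntichain_codePrefix {A : Type*} {F X : Set (List A)} (hF : Factorial F)
    (hX : SuffixCode X) (hcomp : RightFComplete X F) {L : ℕ} (hL : ∀ x ∈ X, x.length ≤ L)
    {w : List A} (hw : w ∈ F) {S : Finset (List A)} (hSw : ∀ p ∈ S, p <+: w)
    (hS : IsAntichain (CodePrefix X) (S : Set (List A))) : S.card ≤ L + 1 := by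
  have hparse : ∀ p ∈ S, ∃ q r, CodePrefix X p q ∧ q ++ r = w ∧ r.length ≤ L := by
    intro p hp
    obtain ⟨s, rfl⟩ := hSw p hp
    obtain ⟨c, r, rfl, hr⟩ :=
      hcomp.exists_eq_decode_append hL (hF s _ hw (List.suffix_append p s).isInfix)
    exact ⟨p ++ decode X c, r, ⟨c, rfl⟩, List.append_assoc p _ r, hr⟩
  choose! q r hpq hqr hr using hparse
  have hinj : Set.InjOn (fun p => (r p).length) (S : Set (List A)) := by
    intro p hp p' hp' hlen
    have hq : q p = q p' := (List.append_inj' ((hqr p hp).trans (hqr p' hp').symm) hlen).1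
    rcases CodePrefix.or_of_codePrefix hX (hpq p hp) (hq ▸ hpq p' hp') with hle | hle
    · exact hS.eq hp hp' hle
    · exact (hS.eq hp' hp hle).symm
  calc S.card ≤ (Finset.range (L + 1)).card :=
        Finset.card_le_card_of_injOn _
          (fun p hp => Finset.mem_coe.2 (Finset.mem_range_succ_iff.2 (hr p hp))) hinj
    _ = L + 1 := Finset.card_range _

/-- A finite set of occurrences of `z` in `w`, no two of which start at positions separated by an
element of `X*`. An occurrence is encoded by the prefix of `w` preceding it. -/
structure SeparatedOccurrences {A : Type*} (X : Set (List A)) (z w : List A)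
    (S : Finset (List A)) : Prop where
  append_prefix : ∀ p ∈ S, p ++ z <+: w
  isAntichain : IsAntichain (CodePrefix X) (S : Set (List A))

namespace SeparatedOccurrences

variable {A : Type*} {F X : Set (List A)} {z w : List A} {S : Finset (List A)}

theorem empty (X : Set (List A)) (z w : List A) : SeparatedOccurrences X z w ∅ where
  append_prefix := by simp only [Finset.notMem_empty, false_imp_iff, implies_true]
  isAntichain := by simp only [Finset.coe_empty, IsAntichain.empty]

theorem map_append (hS : SeparatedOccurrences X z w S) (p : List A) :
    SeparatedOccurrences X z (p ++ w) (S.map ⟨(p ++ ·), List.append_right_injective p⟩) where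
  append_prefix := by
    simp only [Finset.forall_mem_map, Function.Embedding.coeFn_mk, List.append_assoc,
      List.prefix_append_right_inj]
    exact hS.append_prefix
  isAntichain := by
    rw [Finset.coe_map]
    exact hS.isAntichain.image _ fun _ _ h => h.of_append_left

theorem mono_right {w' : List A} (hS : SeparatedOccurrences X z w S) (h : w <+: w') :
    SeparatedOccurrences X z w' S :=
  ⟨fun p hp => (hS.append_prefix p hp).trans h, hS.isAntichain⟩

theorem exists_card_succ_of_not_infix (hX : BifixCode X) {u v : List X} (huv : ¬ u <:+: v)
    (t : List X) (hS : SeparatedOccurrences X (decode X u) (decode X v) S) :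
    ∃ S', SeparatedOccurrences X (decode X u) (decode X (v ++ t ++ u)) S' ∧
      S'.card = S.card + 1 := by
  have hvt : decode X v <+: decode X (v ++ t) := by
    rw [decode_append]; exact List.prefix_append _ _
  have hnot : ∀ p ∈ S, ¬ CodePrefix X p (decode X (v ++ t)) := fun p hp h =>
    huv (h.infix_of_decode_occurrence hX (hS.append_prefix p hp))
  have hprefix : ∀ p ∈ S, p <+: decode X (v ++ t) := fun p hp =>
    ((List.prefix_append p _).trans (hS.append_prefix p hp)).trans hvt
  have hnew : decode X (v ++ t) ∉ S := fun h => hnot _ h (.refl X _)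
  refine ⟨S.cons _ hnew, ⟨?_, ?_⟩, Finset.card_cons hnew⟩
  · rw [decode_append (v ++ t) u, Finset.forall_mem_cons]
    exact ⟨List.prefix_rfl,
      (hS.mono_right (hvt.trans (List.prefix_append _ _))).append_prefix⟩
  · rw [Finset.coe_cons]
    refine hS.isAntichain.insert (fun p hp _ => hnot p hp) fun p hp hne h => hne ?_
    exact h.isPrefix.eq_of_length_le (hprefix p hp).length_le

theorem exists_card_eq (hF : UniformlyRecurrent F) (hX : BifixCode X)
    (hrec : Recurrent {a : List X | decode X a ∈ F}) {u : List X} (hu : decode X u ∈ F)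
    (havoid : ∀ N, ∃ v : List X, decode X v ∈ F ∧ N ≤ v.length ∧ ¬ u <:+: v) (k : ℕ) :
    ∃ w ∈ F, ∃ S, SeparatedOccurrences X (decode X u) w S ∧ S.card = k := by
  induction k with
  | zero => exact ⟨_, hu, ∅, .empty X _ _, Finset.card_empty⟩
  | succ k ih =>
    obtain ⟨w, hw, S, hS, hcard⟩ := ih
    obtain ⟨N, hN⟩ := hF.2 w hw
    obtain ⟨v, hv, hNv, huv⟩ := havoid N
    obtain ⟨p, q, hpq⟩ := hN _ hv (hNv.trans (length_le_length_decode hX.1.2.1 v))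
    obtain ⟨t, ht⟩ := hrec.2 v hv u hu
    obtain ⟨S', hS', hcard'⟩ :=
      ((hS.map_append p).mono_right ⟨q, hpq⟩).exists_card_succ_of_not_infix hX huv t
    exact ⟨_, ht, S', hS', by rw [hcard', Finset.card_map, hcard]⟩

end SeparatedOccurrences

theorem charged_decoding_recurrent_implies_uniformly_recurrent_general {A : Type*}
    {F X : Set (List A)} (hF : UniformlyRecurrent F) (hXbdd : BddAbove (List.length '' X))
    (hX : BifixCode X) (hcomp : RightFComplete X F)
    (hrec : Recurrent {a : List X | decode X a ∈ F}) :
    UniformlyRecurrent {a : List X | decode X a ∈ F} := by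
  refine ⟨hrec.1, fun u hu => ?_⟩
  by_contra! havoid
  obtain ⟨L, hL⟩ := hXbdd
  obtain ⟨w, hw, S, hS, hcard⟩ :=
    SeparatedOccurrences.exists_card_eq hF hX hrec hu havoid (L + 2)
  have hle : S.card ≤ L + 1 :=
    card_le_of_isAntichain_codePrefix hF.1.2.1 hX.2 hcomp (Set.forall_mem_image.1 hL) hw
      (fun p hp => (List.prefix_append p _).trans (hS.append_prefix p hp)) hS.isAntichain
  omega

/-- If the complete bifix decoding of a uniformly recurrent language `F`
by a finite `F`-complete bifix code `X ⊆ F` is recurrent over the alphabet `X`,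
then it is uniformly recurrent over `X`. -/
theorem charged_decoding_recurrent_implies_uniformly_recurrent
    {A : Type*} [Fintype A] [Nonempty A] (F X : Set (List A))
    (hF : UniformlyRecurrent F) (hXF : X ⊆ F) (hXfin : X.Finite)
    (hXbifix : BifixCode X) (hXcomp : FComplete X F)
    (hrec : Recurrent {l : List ↥X | decode X l ∈ F}) :
    UniformlyRecurrent {l : List ↥X | decode X l ∈ F} :=
  charged_decoding_recurrent_implies_uniformly_recurrent_general hF
    (hXfin.image List.length).bddAbove hXbifix hXcomp.1 hrec
end

section
/- Let A be a finite alphabet and let F₁, …, F_k ⊆ A* be finitely many uniformly recurrent languages. If the union F = F₁ ∪ ⋯ ∪ F_k is recurrent, then F is uniformly recurrent. -/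
/-!
A recurrent language is directed for the factor order: `u` and `v` are both factors of some word
`u ++ w ++ v` of the language. If a directed set is covered by finitely many lower sets and is
contained in none of them, then an upper bound of one missing witness per lower set lies in some
lower set, and hence so does the witness missing from it, a contradiction. So a recurrent finite
union of factorial languages is already one of these languages.
-/

theorem exists_subset_of_directedOn_of_subset_iUnion {α ι : Type*} [Finite ι]
    {r : α → α → Prop} [IsTrans α r] {s : Set α} {t : ι → Set α}
    (hne : s.Nonempty) (hdir : DirectedOn r s)
    (hlower : ∀ i x y, y ∈ t i → r x y → x ∈ t i) (hcover : s ⊆ ⋃ i, t i) :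
    ∃ i, s ⊆ t i := by
  by_contra! hnot
  choose x hxs hxt using fun i ↦ Set.not_subset.mp (hnot i)
  have : Nonempty s := hne.to_subtype
  obtain ⟨⟨z, hz⟩, hxz⟩ := hdir.directed_val.finite_le fun i ↦ (⟨x i, hxs i⟩ : s)
  obtain ⟨i, hzi⟩ := Set.mem_iUnion.mp (hcover hz)
  exact hxt i (hlower i (x i) z hzi (hxz i))

section Languages

variable {A : Type*}

theorem Recurrent.directedOn_infix {F : Set (List A)} (hF : Recurrent F) :
    DirectedOn (· <:+: ·) F := by
  intro u hu v hv
  obtain ⟨w, huwv⟩ := hF.2 u hu v hv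
  exact ⟨u ++ w ++ v, huwv, (List.prefix_append_of_prefix (List.prefix_append u w)).isInfix,
    (List.suffix_append (u ++ w) v).isInfix⟩

theorem Factorial.exists_iUnion_eq_of_directedOn {ι : Type*} [Finite ι] {F : ι → Set (List A)}
    (hF : ∀ i, Factorial (F i)) (hne : (⋃ i, F i).Nonempty)
    (hdir : DirectedOn (· <:+: ·) (⋃ i, F i)) :
    ∃ i, ⋃ j, F j = F i := by
  obtain ⟨i, hi⟩ := exists_subset_of_directedOn_of_subset_iUnion hne hdir hF subset_rfl
  exact ⟨i, hi.antisymm (Set.subset_iUnion F i)⟩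

theorem recurrent_finite_union_of_uniformlyRecurrent_is_uniformlyRecurrent_general
    {ι : Type*} [Finite ι] (F : ι → Set (List A)) (hF : ∀ i, UniformlyRecurrent (F i))
    (hne : (⋃ i, F i).Nonempty) (hdir : DirectedOn (· <:+: ·) (⋃ i, F i)) :
    UniformlyRecurrent (⋃ i, F i) := by
  obtain ⟨i, hi⟩ := Factorial.exists_iUnion_eq_of_directedOn (fun i ↦ (hF i).1.2.1) hne hdir
  exact hi ▸ hF i

end Languages

/-- A finite union of uniformly recurrent languages that is recurrent
is uniformly recurrent. -/
theorem recurrent_finite_union_of_uniformlyRecurrent_is_uniformlyRecurrent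
    {A : Type*} [Fintype A] [Nonempty A] (k : ℕ) (F : Fin k → Set (List A))
    (hF : ∀ i, UniformlyRecurrent (F i))
    (hrec : Recurrent (⋃ i, F i)) :
    UniformlyRecurrent (⋃ i, F i) :=
  recurrent_finite_union_of_uniformlyRecurrent_is_uniformlyRecurrent_general F hF
    hrec.1.1 hrec.directedOn_infix
end

section
/- Let A be a finite alphabet, let F ⊆ A* be a subshift language, and let X ⊆ F be a finite F-complete bifix code. Then the decoding δ⁻¹(F) of F by X is a subshift language over the alphabet X: it is nonempty, factorial, and prolongable. -/
/-!
If `X` is a prefix code, then `X*` is right unitary: `u` and `u ++ v` in `X*` force `v ∈ X*`.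
Given `w ∈ X* ∩ F`, extend it inside `F` to a word `w ++ v` with `v` longer than every codeword.
Right `F`-completeness completes `w ++ v` to an element `w ++ v ++ t` of `X*`, and then
`v ++ t ∈ X*` starts with a codeword `x`, which is short enough to be a prefix of `v`;
hence `w ++ x ∈ F`. Word reversal gives the extension to the left.
-/

section

variable {A : Type*} {F X : Set (List A)}

theorem eq_nil_or_exists_append_of_mem_kStarSet {w : List A} (hw : w ∈ KStarSet X) :
    w = [] ∨ ∃ x ∈ X, ∃ v ∈ KStarSet X, x ++ v = w := by
  obtain ⟨_ | ⟨x, l⟩, hl, rfl⟩ := hw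
  · exact .inl rfl
  · rw [List.forall_mem_cons] at hl
    exact .inr ⟨x, hl.1, l.flatten, ⟨l, hl.2, rfl⟩, rfl⟩

theorem reverse_mem_kStarSet {w : List A} (hw : w ∈ KStarSet X) :
    w.reverse ∈ KStarSet (List.reverse ⁻¹' X) := by
  obtain ⟨l, hl, rfl⟩ := hw
  refine ⟨(l.map List.reverse).reverse, fun x hx => hl x.reverse ?_, List.reverse_flatten⟩
  simpa using hx

theorem Factorial.preimage_reverse (hF : Factorial F) : Factorial (List.reverse ⁻¹' F) :=
  fun _ _ hw huw => hF _ _ hw (List.reverse_infix.2 huw)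

theorem Prolongable.preimage_reverse (hF : Prolongable F) :
    Prolongable (List.reverse ⁻¹' F) := by
  intro u hu
  obtain ⟨a, b, ha, hb⟩ := hF _ hu
  exact ⟨b, a, by simpa using hb, by simpa using ha⟩

theorem SuffixCode.prefixCode_preimage_reverse (hX : SuffixCode X) :
    PrefixCode (List.reverse ⁻¹' X) := by
  obtain ⟨hne, hnil, hsuffix⟩ := hX
  refine ⟨hne.preimage List.reverse_surjective, fun x hx => ?_, fun x hx y hy hxy => ?_⟩
  · simpa using hnil _ hx
  · exact List.reverse_injective (hsuffix _ hx _ hy (List.reverse_suffix.2 hxy))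

theorem LeftFComplete.rightFComplete_preimage_reverse (hX : LeftFComplete X F) :
    RightFComplete (List.reverse ⁻¹' X) (List.reverse ⁻¹' F) := by
  intro u hu
  obtain ⟨w, hw, huw⟩ := hX _ hu
  exact ⟨w.reverse, reverse_mem_kStarSet hw, by simpa using List.reverse_prefix.2 huw⟩

theorem PrefixCode.eq_of_append_eq_append (hX : PrefixCode X) {x y u v : List A}
    (hx : x ∈ X) (hy : y ∈ X) (h : x ++ u = y ++ v) : x = y := by
  obtain ⟨-, -, hprefix⟩ := hX
  have hxv : x <+: y ++ v := ⟨u, h⟩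
  rcases List.prefix_or_prefix_of_prefix hxv (List.prefix_append y v) with hxy | hyx
  · exact hprefix x hx y hy hxy
  · exact (hprefix y hy x hx hyx).symm

theorem PrefixCode.mem_kStarSet_of_append_mem (hX : PrefixCode X) {u v : List A}
    (hu : u ∈ KStarSet X) (huv : u ++ v ∈ KStarSet X) : v ∈ KStarSet X := by
  obtain ⟨l, hl, rfl⟩ := hu
  induction l with
  | nil => exact huv
  | cons x l ih =>
    rw [List.forall_mem_cons] at hl
    obtain ⟨hx, hl⟩ := hl
    rw [List.flatten_cons, List.append_assoc] at huv
    rcases eq_nil_or_exists_append_of_mem_kStarSet huv with hnil | ⟨y, hy, w, hw, h⟩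
    · exact absurd (List.append_eq_nil_iff.1 hnil).1 (hX.2.1 x hx)
    · obtain rfl := hX.eq_of_append_eq_append hy hx h
      exact ih hl (List.append_cancel_left h ▸ hw)

theorem Prolongable.exists_length_eq_append_mem (hF : Prolongable F) {w : List A} (hw : w ∈ F)
    (n : ℕ) : ∃ v : List A, v.length = n ∧ w ++ v ∈ F := by
  induction n with
  | zero => exact ⟨[], rfl, by simpa using hw⟩
  | succ n ih =>
    obtain ⟨v, rfl, hv⟩ := ih
    obtain ⟨_, b, _, hb⟩ := hF _ hv
    exact ⟨v ++ [b], by simp, by simpa using hb⟩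

theorem RightFComplete.exists_append_mem (hX : RightFComplete X F) (hFfac : Factorial F)
    (hFpro : Prolongable F) (hXpre : PrefixCode X) (hXlen : BddAbove (List.length '' X))
    {w : List A} (hwX : w ∈ KStarSet X) (hwF : w ∈ F) : ∃ x ∈ X, w ++ x ∈ F := by
  obtain ⟨N, hN⟩ := hXlen
  obtain ⟨v, hvN, hwv⟩ := hFpro.exists_length_eq_append_mem hwF (N + 1)
  obtain ⟨_, hwvt, t, rfl⟩ := hX _ hwv
  rw [List.append_assoc] at hwvt
  have hvt : v ++ t ∈ KStarSet X := hXpre.mem_kStarSet_of_append_mem hwX hwvt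
  rcases eq_nil_or_exists_append_of_mem_kStarSet hvt with hnil | ⟨x, hx, s, -, hxs⟩
  · simp [(List.append_eq_nil_iff.1 hnil).1] at hvN
  · have hxN : x.length ≤ N := hN (Set.mem_image_of_mem _ hx)
    have hxv : x <+: v :=
      List.prefix_of_prefix_length_le ⟨s, hxs⟩ (List.prefix_append v t) (by omega)
    exact ⟨x, hx, hFfac _ _ hwv ((List.prefix_append_right_inj w).2 hxv).isInfix⟩

theorem LeftFComplete.exists_append_mem (hX : LeftFComplete X F) (hFfac : Factorial F)
    (hFpro : Prolongable F) (hXsuf : SuffixCode X) (hXlen : BddAbove (List.length '' X))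
    {w : List A} (hwX : w ∈ KStarSet X) (hwF : w ∈ F) : ∃ x ∈ X, x ++ w ∈ F := by
  have hlen : BddAbove (List.length '' (List.reverse ⁻¹' X)) := by
    refine hXlen.mono ?_
    rintro _ ⟨x, hx, rfl⟩
    exact ⟨x.reverse, hx, List.length_reverse⟩
  obtain ⟨x, hx, hwx⟩ := hX.rightFComplete_preimage_reverse.exists_append_mem
    hFfac.preimage_reverse hFpro.preimage_reverse hXsuf.prefixCode_preimage_reverse hlen
    (reverse_mem_kStarSet hwX) (by simpa using hwF)
  exact ⟨x.reverse, hx, by simpa using hwx⟩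

theorem decode_mem_kStarSet (l : List ↥X) : decode X l ∈ KStarSet X :=
  ⟨l.map Subtype.val, List.forall_mem_map.2 fun x _ => x.2, rfl⟩

theorem Factorial.setOf_decode_mem (hF : Factorial F) (X : Set (List A)) :
    Factorial {l : List ↥X | decode X l ∈ F} :=
  fun _ _ hv huv => hF _ _ hv (huv.map Subtype.val).flatten

theorem decoding_is_subshift_language_general (hF : SubshiftLanguage F)
    (hXlen : BddAbove (List.length '' X)) (hXbifix : BifixCode X) (hXcomp : FComplete X F) :
    SubshiftLanguage {l : List ↥X | decode X l ∈ F} := by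
  obtain ⟨⟨w, hw⟩, hfac, hpro⟩ := hF
  refine ⟨⟨[], hfac _ _ hw List.nil_infix⟩, hfac.setOf_decode_mem X, fun l hl => ?_⟩
  have hlX : decode X l ∈ KStarSet X := decode_mem_kStarSet l
  obtain ⟨x, hx, hxl⟩ := hXcomp.2.exists_append_mem hfac hpro hXbifix.2 hXlen hlX hl
  obtain ⟨y, hy, hly⟩ := hXcomp.1.exists_append_mem hfac hpro hXbifix.1 hXlen hlX hl
  exact ⟨⟨x, hx⟩, ⟨y, hy⟩, by simpa [decode] using hxl, by simpa [decode] using hly⟩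

end

/-- The decoding of a subshift language `F` by a finite `F`-complete
bifix code `X ⊆ F` is a subshift language over the alphabet `X`. -/
theorem decoding_is_subshift_language
    {A : Type*} [Fintype A] [Nonempty A] (F X : Set (List A))
    (hF : SubshiftLanguage F) (hXF : X ⊆ F) (hXfin : X.Finite)
    (hXbifix : BifixCode X) (hXcomp : FComplete X F) :
    SubshiftLanguage {l : List ↥X | decode X l ∈ F} :=
  decoding_is_subshift_language_general hF (hXfin.image _).bddAbove hXbifix hXcomp
end

section
/- Let A be a finite alphabet, let F ⊆ A* be a uniformly recurrent language, and let Z ⊆ A+ be a rational complete bifix code. Then the set Z ∩ F is finite. -/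
/-!
To each word `u` attach the set `Q u` of left quotients of `Z` by the suffixes of `u`. It grows
when `u` is extended to the left, and `Z` has finitely many left quotients, so some `u ∈ F` is such
that no extension of `u` to the left inside `F` enlarges `Q u`. If this `u` occurred in a word
`z ∈ Z ∩ F` otherwise than as a prefix, say `z = v s` with `u` a proper suffix of `v`, then the
quotient of `Z` by `v` would be the quotient by some suffix `t` of `u`, and `t s` would be a proper
suffix of `z` lying in `Z`. Hence `u` occurs in `z` at most as a prefix, and uniform recurrence
bounds the length of `z`.
-/

theorem IsRational.isRegular {A : Type*} {L : Language A} (hL : IsRational L) : L.IsRegular := by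
  obtain ⟨σ, hσ, M, hM⟩ := hL
  exact Language.isRegular_iff.mpr ⟨σ, hσ, M, Language.ext hM⟩

theorem SuffixCode.isAntichain {A : Type*} {X : Set (List A)} (hX : SuffixCode X) :
    IsAntichain (· <:+ ·) X :=
  fun _ hx _ hy hne hxy => hne (hX.2.2 _ hx _ hy hxy)

section SuffixQuotients

variable {A : Type*} {L : Language A} {F : Set (List A)} {u v s z : List A} {a : A}

/-- The left quotients of `L` by the suffixes of `u`. In terms of the minimal automaton of `L`,
these are the states reached from the initial state by reading a suffix of `u`. -/
def suffixQuotients (L : Language A) (u : List A) : Set (Language A) :=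
  L.leftQuotient '' {t | t <:+ u}

theorem suffixQuotients_mono (huv : u <:+ v) : suffixQuotients L u ⊆ suffixQuotients L v :=
  Set.image_mono fun _ ht => ht.trans huv

theorem leftQuotient_mem_suffixQuotients_self : L.leftQuotient u ∈ suffixQuotients L u :=
  Set.mem_image_of_mem _ (List.suffix_refl u)

theorem finite_range_suffixQuotients (hL : L.IsRegular) :
    (Set.range (suffixQuotients L)).Finite := by
  refine hL.finite_range_leftQuotient.finite_subsets.subset ?_
  rintro _ ⟨u, rfl⟩
  exact Set.image_subset_range _ _

theorem exists_forall_suffixQuotients_subset (hL : L.IsRegular) (hF : F.Nonempty) :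
    ∃ u ∈ F, ∀ v ∈ F, u <:+ v → suffixQuotients L v ⊆ suffixQuotients L u := by
  obtain ⟨u, huF, hmax⟩ := Set.Finite.exists_maximalFor' (suffixQuotients L) F
    ((finite_range_suffixQuotients hL).subset (Set.image_subset_range _ _)) hF
  exact ⟨u, huF, fun v hvF huv => hmax hvF (suffixQuotients_mono huv)⟩

theorem leftQuotient_notMem_suffixQuotients (hL : IsAntichain (· <:+ ·) (L : Set (List A)))
    (huv : u <:+ v) (hlt : u.length < v.length) (hvs : v ++ s ∈ L) :
    L.leftQuotient v ∉ suffixQuotients L u := by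
  rintro ⟨t, htu, htv⟩
  have hts : t ++ s ∈ L := by
    rwa [← Language.mem_leftQuotient, htv, Language.mem_leftQuotient]
  have hsuffix : t ++ s <:+ v ++ s := List.suffix_append_self_iff.mpr (htu.trans huv)
  have htv_eq : t = v := List.append_cancel_right (hL.eq hts hvs hsuffix)
  exact hlt.not_ge (htv_eq ▸ htu).length_le

theorem not_isInfix_of_cons_mem (hL : IsAntichain (· <:+ ·) (L : Set (List A)))
    (hF : Factorial F)
    (hu : ∀ v ∈ F, u <:+ v → suffixQuotients L v ⊆ suffixQuotients L u)
    (hzL : a :: z ∈ L) (hzF : a :: z ∈ F) : ¬ u <:+: z := by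
  rintro ⟨p, s, rfl⟩
  have hvF : a :: p ++ u ∈ F := hF _ _ hzF ⟨[], s, by simp⟩
  have huv : u <:+ a :: p ++ u := List.suffix_append _ _
  have hlt : u.length < (a :: p ++ u).length := by simp
  exact leftQuotient_notMem_suffixQuotients hL huv hlt hzL
    (hu _ hvF huv leftQuotient_mem_suffixQuotients_self)

theorem UniformlyRecurrent.exists_forall_length_le (hF : UniformlyRecurrent F)
    (hreg : L.IsRegular) (hL : IsAntichain (· <:+ ·) (L : Set (List A))) :
    ∃ N : ℕ, ∀ z ∈ L, z ∈ F → z.length ≤ N := by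
  obtain ⟨⟨hne, hfac, -⟩, hrec⟩ := hF
  obtain ⟨u, huF, hu⟩ := exists_forall_suffixQuotients_subset hreg hne
  obtain ⟨N, hN⟩ := hrec u huF
  refine ⟨N, fun z hzL hzF => ?_⟩
  cases z with
  | nil => exact N.zero_le
  | cons a z =>
    have hz : z ∈ F := hfac _ _ hzF (List.suffix_cons a z).isInfix
    have hlt : z.length < N := by
      by_contra! hle
      exact not_isInfix_of_cons_mem hL hfac hu hzL hzF (hN z hz hle)
    exact hlt

end SuffixQuotients

theorem inter_rational_complete_bifix_finite_general
    {A : Type*} [Finite A] (F Z : Set (List A))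
    (hF : UniformlyRecurrent F) (hZrat : IsRational Z) (hZsuffix : SuffixCode Z) :
    (Z ∩ F).Finite := by
  obtain ⟨N, hN⟩ := hF.exists_forall_length_le hZrat.isRegular hZsuffix.isAntichain
  exact (List.finite_length_le A N).subset fun z hz => hN z hz.1 hz.2

/-- If `F` is uniformly recurrent and `Z` is a rational complete
bifix code, then `Z ∩ F` is finite. -/
theorem inter_rational_complete_bifix_finite
    {A : Type*} [Fintype A] [Nonempty A] (F Z : Set (List A))
    (hF : UniformlyRecurrent F) (hZrat : IsRational Z) (hZbifix : BifixCode Z)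
    (hZcomp : FComplete Z Set.univ) :
    (Z ∩ F).Finite :=
  inter_rational_complete_bifix_finite_general F Z hF hZrat hZbifix.2
end

section
/- Let A be a finite alphabet, let F ⊆ A* be a factorial language, and let X ⊆ F be a prefix code. Then X is an F-maximal prefix code if and only if X is right F-complete. -/
/-- `X` is an `F`-maximal prefix code: a prefix code contained in `F` that is maximal
among prefix codes contained in `F`. -/
def FMaximalPrefixCode {A : Type*} (X F : Set (List A)) : Prop :=
  PrefixCode X ∧ X ⊆ F ∧ ∀ Y : Set (List A), PrefixCode Y → X ⊆ Y → Y ⊆ F → Y = X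

/-!
Both properties say that every word of `F` is prefix-comparable with a codeword. If `u ∈ F` is
comparable with no codeword, then adding `u` to `X` gives a larger prefix code inside `F`; in a
prefix code, conversely, comparable words are equal. As for completeness, a word `u ∈ F` that is
not a prefix of a codeword then has the form `u = x ++ v` with `x ∈ X`, and the shorter word `v` is
again in `F`, so a word of `X*` with prefix `u` is found by induction on the length.
-/

/-- A language is suffix-closed if it contains every suffix of its words: the one-sided form of
`Factorial` suited to reading codewords off from the left. -/
def SuffixClosed {A : Type*} (F : Set (List A)) : Prop :=
  ∀ ⦃u w : List A⦄, w ∈ F → u <:+ w → u ∈ F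

/-- Two words are prefix-comparable if one of them is a prefix of the other; this is comparability
in the prefix order, so prefix codes are antichains for it. -/
def PrefixComparable {A : Type*} (u v : List A) : Prop :=
  u <+: v ∨ v <+: u

section

variable {A : Type*} {F X : Set (List A)} {u v w x y : List A}

theorem Factorial.suffixClosed (hF : Factorial F) : SuffixClosed F :=
  fun u w hw huw => hF u w hw huw.isInfix

theorem PrefixComparable.nil_left (u : List A) : PrefixComparable [] u :=
  Or.inl List.nil_prefix

theorem PrefixComparable.of_prefix (hu : u <+: w) (hv : v <+: w) : PrefixComparable u v :=
  List.prefix_or_prefix_of_prefix hu hv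

theorem KStarSet.nil_mem (X : Set (List A)) : [] ∈ KStarSet X :=
  ⟨[], by simp⟩

theorem KStarSet.append_mem (hx : x ∈ X) (hw : w ∈ KStarSet X) : x ++ w ∈ KStarSet X := by
  obtain ⟨l, hl, rfl⟩ := hw
  exact ⟨x :: l, List.forall_mem_cons.mpr ⟨hx, hl⟩, List.flatten_cons.symm⟩

theorem KStarSet.mem_of_mem (hx : x ∈ X) : x ∈ KStarSet X := by
  simpa using KStarSet.append_mem hx (KStarSet.nil_mem X)

theorem KStarSet.eq_nil_or_exists_prefix (hw : w ∈ KStarSet X) : w = [] ∨ ∃ x ∈ X, x <+: w := by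
  obtain ⟨_ | ⟨x, l⟩, hl, rfl⟩ := hw
  · exact Or.inl List.flatten_nil
  · exact Or.inr ⟨x, hl x List.mem_cons_self, List.prefix_append x l.flatten⟩

theorem PrefixCode.eq_of_prefixComparable (hX : PrefixCode X) (hx : x ∈ X) (hy : y ∈ X)
    (hxy : PrefixComparable x y) : x = y :=
  hxy.elim (hX.2.2 x hx y hy) fun hyx => (hX.2.2 y hy x hx hyx).symm

theorem PrefixCode.insert_of_not_prefixComparable (hX : PrefixCode X)
    (hu : ∀ x ∈ X, ¬PrefixComparable u x) : PrefixCode (insert u X) := by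
  refine ⟨Set.insert_nonempty u X, ?_, ?_⟩
  · rintro y (rfl | hy)
    · rintro rfl
      obtain ⟨x, hx⟩ := hX.1
      exact hu x hx (PrefixComparable.nil_left x)
    · exact hX.2.1 y hy
  · rintro y (rfl | hy) z (rfl | hz) hyz
    · rfl
    · exact absurd (Or.inl hyz) (hu z hz)
    · exact absurd (Or.inr hyz) (hu y hy)
    · exact hX.2.2 y hy z hz hyz

theorem fMaximalPrefixCode_iff_forall_exists_prefixComparable (hX : PrefixCode X) (hXF : X ⊆ F) :
    FMaximalPrefixCode X F ↔ ∀ u ∈ F, ∃ x ∈ X, PrefixComparable u x := by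
  constructor
  · rintro ⟨-, -, hmax⟩ u hu
    by_contra! hnot
    have hins : insert u X = X :=
      hmax _ (hX.insert_of_not_prefixComparable hnot) (Set.subset_insert u X)
        (Set.insert_subset hu hXF)
    exact hnot u (Set.insert_eq_self.mp hins) (Or.inl List.prefix_rfl)
  · refine fun hcomp => ⟨hX, hXF, fun Y hY hXY hYF => Set.Subset.antisymm (fun y hy => ?_) hXY⟩
    obtain ⟨x, hx, hyx⟩ := hcomp y (hYF hy)
    rwa [hY.eq_of_prefixComparable hy (hXY hx) hyx]

theorem RightFComplete.exists_prefixComparable (h : RightFComplete X F) (hX : X.Nonempty)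
    (hu : u ∈ F) : ∃ x ∈ X, PrefixComparable u x := by
  obtain ⟨w, hw, huw⟩ := h u hu
  obtain rfl | ⟨x, hx, hxw⟩ := KStarSet.eq_nil_or_exists_prefix hw
  · obtain ⟨x, hx⟩ := hX
    obtain rfl := List.prefix_nil.mp huw
    exact ⟨x, hx, PrefixComparable.nil_left x⟩
  · exact ⟨x, hx, PrefixComparable.of_prefix huw hxw⟩

theorem SuffixClosed.rightFComplete (hF : SuffixClosed F) (hX : ∀ x ∈ X, x ≠ [])
    (hcomp : ∀ u ∈ F, ∃ x ∈ X, PrefixComparable u x) : RightFComplete X F := by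
  intro u hu
  induction hn : u.length using Nat.strong_induction_on generalizing u with
  | _ n ih =>
    obtain ⟨x, hx, hux | ⟨v, rfl⟩⟩ := hcomp u hu
    · exact ⟨x, KStarSet.mem_of_mem hx, hux⟩
    · have hv : v ∈ F := hF hu (List.suffix_append x v)
      have hlt : v.length < n := by
        have := List.length_pos_iff.mpr (hX x hx)
        rw [List.length_append] at hn
        omega
      obtain ⟨w, hw, hvw⟩ := ih v.length hlt v hv rfl
      exact ⟨x ++ w, KStarSet.append_mem hx hw, (List.prefix_append_right_inj x).mpr hvw⟩

theorem SuffixClosed.rightFComplete_iff_forall_exists_prefixComparable (hF : SuffixClosed F)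
    (hne : X.Nonempty) (hX : ∀ x ∈ X, x ≠ []) :
    RightFComplete X F ↔ ∀ u ∈ F, ∃ x ∈ X, PrefixComparable u x :=
  ⟨fun h _ hu => h.exists_prefixComparable hne hu, hF.rightFComplete hX⟩

theorem prefix_code_F_maximal_iff_right_F_complete_general (hF : SuffixClosed F)
    (hX : PrefixCode X) (hXF : X ⊆ F) : FMaximalPrefixCode X F ↔ RightFComplete X F :=
  (fMaximalPrefixCode_iff_forall_exists_prefixComparable hX hXF).trans
    (hF.rightFComplete_iff_forall_exists_prefixComparable hX.1 hX.2.1).symm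

end

/-- For a factorial language `F` and a prefix code `X ⊆ F`,
`X` is an `F`-maximal prefix code iff it is right `F`-complete. -/
theorem prefix_code_F_maximal_iff_right_F_complete
    {A : Type*} [Fintype A] [Nonempty A] (F X : Set (List A))
    (hF : Factorial F) (hX : PrefixCode X) (hXF : X ⊆ F) :
    FMaximalPrefixCode X F ↔ RightFComplete X F :=
  prefix_code_F_maximal_iff_right_F_complete_general hF.suffixClosed hX hXF
end

section
/- Let M be a compact monoid and let K ⊆ M be a nonempty closed subset. Then for every u ∈ K there exists v ∈ K such that v ≤_J u and v is ≤_J-minimal in K, i.e., every w ∈ K with w ≤_J v satisfies v ≤_J w. -/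
/-- The `≤_J` quasi-order on a monoid: `x ≤_J y` iff `y` is a factor of `x`,
i.e. `x ∈ M y M`. -/
def leJ {M : Type*} [Monoid M] (x y : M) : Prop :=
  ∃ p q : M, x = p * y * q

/-!
In a compact Hausdorff monoid every principal ideal `M y M` is closed, as a continuous image of
`M × M`. So `≤_J` is a preorder with closed lower sets, and over such a preorder Zorn's lemma
produces minimal elements of compact sets: by compactness, a chain in `K` has a lower bound in `K`.
-/

section Order

variable {α : Type*} [Preorder α] [TopologicalSpace α] [ClosedIicTopology α] {K : Set α}

theorem exists_mem_lowerBounds_of_isCompact (hK : IsCompact K) {c : Set α} (hcK : c ⊆ K)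
    (hc : DirectedOn (· ≥ ·) c) (hcne : c.Nonempty) : ∃ x ∈ K, x ∈ lowerBounds c := by
  have : Nonempty c := hcne.to_subtype
  suffices (K ∩ ⋂ y : c, Set.Iic (y : α)).Nonempty by
    obtain ⟨x, hxK, hx⟩ := this
    exact ⟨x, hxK, fun y hy => Set.mem_iInter.mp hx ⟨y, hy⟩⟩
  by_contra hempty
  have hdir : Directed (· ⊇ ·) fun y : c => Set.Iic (y : α) :=
    hc.directed_val.mono_comp (g := Set.Iic) _ fun _ _ => Set.Iic_subset_Iic.mpr
  obtain ⟨y, hy⟩ := hK.elim_directed_family_closed _ (fun _ => isClosed_Iic)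
    (Set.not_nonempty_iff_eq_empty.mp hempty) hdir
  exact Set.eq_empty_iff_forall_notMem.mp hy y ⟨hcK y.2, Set.self_mem_Iic⟩

theorem exists_le_minimal_of_isCompact (hK : IsCompact K) {u : α} (hu : u ∈ K) :
    ∃ v ≤ u, Minimal (· ∈ K) v :=
  zorn_le_nonempty₀ (α := αᵒᵈ) K (fun _ hcK hc y hy =>
    exists_mem_lowerBounds_of_isCompact hK hcK (IsChain.directedOn hc) ⟨y, hy⟩) u hu

end Order

namespace leJ

variable {M : Type*} [Monoid M]

protected theorem refl (x : M) : leJ x x :=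
  ⟨1, 1, by rw [one_mul, mul_one]⟩

protected theorem trans {x y z : M} : leJ x y → leJ y z → leJ x z := by
  rintro ⟨p, q, rfl⟩ ⟨p', q', rfl⟩
  exact ⟨p * p', q' * q, by simp only [mul_assoc]⟩

/-- The preorder `≤_J` on a monoid, through which order-theoretic results apply to `leJ`. It is not
an instance, since a monoid may carry another order. -/
abbrev preorder (M : Type*) [Monoid M] : Preorder M where
  le := leJ
  le_refl := leJ.refl
  le_trans _ _ _ := leJ.trans

theorem setOf_eq_range (y : M) : {x | leJ x y} = Set.range fun pq : M × M => pq.1 * y * pq.2 := by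
  ext x
  simp only [leJ, Set.mem_ofPred_eq, Set.mem_range, Prod.exists, eq_comm]

theorem isClosed_setOf [TopologicalSpace M] [CompactSpace M] [T2Space M] [ContinuousMul M] (y : M) :
    IsClosed {x | leJ x y} := by
  rw [setOf_eq_range]
  exact (isCompact_range (by fun_prop)).isClosed

end leJ

/-- In a compact monoid, every element of a nonempty closed subset `K`
has a `≤_J`-minimal element of `K` below it. -/
theorem exists_leJ_minimal_in_closed_subset
    {M : Type*} [Monoid M] [TopologicalSpace M] [CompactSpace M] [T2Space M]
    [ContinuousMul M] (K : Set M) (hKne : K.Nonempty) (hKcl : IsClosed K) :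
    ∀ u ∈ K, ∃ v ∈ K, leJ v u ∧ ∀ w ∈ K, leJ w v → leJ v w := by
  intro u hu
  let : Preorder M := leJ.preorder M
  have : ClosedIicTopology M := ⟨leJ.isClosed_setOf⟩
  obtain ⟨v, hvu, hv⟩ := exists_le_minimal_of_isCompact hKcl.isCompact hu
  exact ⟨v, hv.prop, hvu, fun w hw hwv => hv.le_of_le hw hwv⟩
end

section
/- Every compact monoid M is stable: for all x, y ∈ M, if x ∈ yM and x, y generate the same two-sided principal ideal (x ∈ MyM and y ∈ MxM), then xM = yM; dually, if x ∈ My and x ∈ MyM and y ∈ MxM, then Mx = My. -/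
/-!
The engine is the swelling lemma: a compact set `A` with `A ⊆ t • A` satisfies `t • A = A`.
The elements `t * u` with `A ⊆ u • A` form a nonempty compact semigroup, so one of them is
idempotent. An idempotent `e` with `A ⊆ e • A` fixes `A` pointwise, so `t • u • a = a` for all
`a ∈ A`. Writing `a = u • b` with `b ∈ A` gives `t • a = t • u • b = b ∈ A`.

If `x = y * m` and `y = p * x * q`, then `xM ⊆ yM ⊆ p • xM`, and the swelling lemma for `xM`
yields `xM = yM`. The dual statement is the same argument for the action of `Mᵐᵒᵖ` on `M`.
-/

open scoped Pointwise
open MulOpposite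

section SemigroupAction

-- `IsScalarTower M M X` is associativity of the action. Unlike `SemigroupAction M X`, it is
-- inferred for both the left and the right multiplication action of a semigroup on itself.
variable {M X : Type*} [Semigroup M] [SMul M X] [IsScalarTower M M X] {A : Set X}

theorem smul_eq_of_isIdempotentElem_of_mem {e : M} (he : IsIdempotentElem e) (hA : A ⊆ e • A)
    {a : X} (ha : a ∈ A) : e • a = a := by
  obtain ⟨b, -, rfl⟩ := hA ha
  change e • e • b = e • b
  rw [← smul_assoc, smul_eq_mul, he.eq]

theorem subset_mul_smul_set {s t : M} (hs : A ⊆ s • A) (ht : A ⊆ t • A) : A ⊆ (s * t) • A :=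
  calc A ⊆ s • A := hs
    _ ⊆ s • t • A := Set.smul_set_mono ht
    _ = (s * t) • A := (smul_assoc s t A).symm

end SemigroupAction

theorem isClosed_setOf_subset_smul_set {M X : Type*} [TopologicalSpace M] [TopologicalSpace X]
    [T1Space X] [SMul M X] [ContinuousSMul M X] {A : Set X} (hA : IsCompact A) (B : Set X) :
    IsClosed {s : M | B ⊆ s • A} := by
  have : CompactSpace A := isCompact_iff_compactSpace.mp hA
  have hmem (b : X) : IsClosed {s : M | b ∈ s • A} := by
    have hgraph : IsClosed {w : M × A | w.1 • (w.2 : X) = b} :=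
      isClosed_singleton.preimage (by fun_prop : Continuous fun w : M × A ↦ w.1 • (w.2 : X))
    convert isClosedMap_fst_of_compactSpace _ hgraph
    ext s
    simp [Set.mem_smul_set]
  simpa only [Set.subset_def, Set.ofPred_forall] using isClosed_biInter fun b _ ↦ hmem b

section Swelling

variable {M X : Type*} [Semigroup M] [TopologicalSpace M] [CompactSpace M] [T2Space M]
  [SeparatelyContinuousMul M] [TopologicalSpace X] [T1Space X] [SMul M X] [IsScalarTower M M X]
  [ContinuousSMul M X] {A B : Set X} {t : M}

theorem exists_forall_smul_smul_eq_of_subset_smul_set (hA : IsCompact A) (ht : A ⊆ t • A) :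
    ∃ u : M, A ⊆ u • A ∧ ∀ a ∈ A, t • u • a = a := by
  let U : Set M := {u | A ⊆ u • A}
  have hU : IsCompact (t • U) := (isClosed_setOf_subset_smul_set hA A).isCompact.smul t
  have hmul : ∀ᵉ (r ∈ t • U) (s ∈ t • U), r * s ∈ t • U := by
    rintro _ ⟨u, hu, rfl⟩ _ ⟨v, hv, rfl⟩
    exact ⟨u * (t * v), subset_mul_smul_set hu (subset_mul_smul_set ht hv),
      (mul_assoc t u (t * v)).symm⟩
  obtain ⟨_, ⟨u, hu, rfl⟩, hidem⟩ := exists_idempotent_in_compact_subsemigroup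
    (fun r ↦ continuous_mul_const r) (t • U) ⟨t * t, t, ht, rfl⟩ hU hmul
  refine ⟨u, hu, fun a ha ↦ ?_⟩
  rw [← smul_assoc]
  exact smul_eq_of_isIdempotentElem_of_mem hidem (subset_mul_smul_set ht hu) ha

theorem smul_set_eq_of_subset_smul_set (hA : IsCompact A) (ht : A ⊆ t • A) : t • A = A := by
  obtain ⟨u, hu, htu⟩ := exists_forall_smul_smul_eq_of_subset_smul_set hA ht
  refine Set.Subset.antisymm (Set.smul_set_subset_iff.mpr fun a ha ↦ ?_) ht
  obtain ⟨b, hb, rfl⟩ := hu ha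
  simpa only [htu b hb] using hb

theorem eq_of_subset_of_subset_smul_set (hA : IsCompact A) (hAB : A ⊆ B) (hB : B ⊆ t • A) :
    A = B :=
  hAB.antisymm (hB.trans_eq (smul_set_eq_of_subset_smul_set hA (hAB.trans hB)))

end Swelling

section Stability

variable {M : Type*} [Semigroup M] [TopologicalSpace M] [CompactSpace M] [T2Space M]
  [ContinuousMul M] {x y : M}

theorem range_mul_left_eq_of_eq_mul (hx : ∃ m, x = y * m) (hy : ∃ p q, y = p * x * q) :
    Set.range (x * ·) = Set.range (y * ·) := by
  obtain ⟨m, hm⟩ := hx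
  obtain ⟨p, q, hpq⟩ := hy
  refine eq_of_subset_of_subset_smul_set (t := p) (isCompact_range (continuous_const_mul x)) ?_ ?_
  · rintro _ ⟨k, rfl⟩
    exact ⟨m * k, by simp only [hm, mul_assoc]⟩
  · rintro _ ⟨k, rfl⟩
    refine ⟨x * (q * k), ⟨q * k, rfl⟩, ?_⟩
    calc p * (x * (q * k)) = p * x * q * k := by simp only [mul_assoc]
      _ = y * k := by rw [← hpq]

theorem range_mul_right_eq_of_eq_mul (hx : ∃ m, x = m * y) (hy : ∃ p q, y = p * x * q) :
    Set.range (· * x) = Set.range (· * y) := by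
  obtain ⟨m, hm⟩ := hx
  obtain ⟨p, q, hpq⟩ := hy
  refine eq_of_subset_of_subset_smul_set (t := op q)
    (isCompact_range (continuous_mul_const x)) ?_ ?_
  · rintro _ ⟨k, rfl⟩
    exact ⟨k * m, by simp only [hm, mul_assoc]⟩
  · rintro _ ⟨k, rfl⟩
    refine ⟨k * p * x, ⟨k * p, rfl⟩, ?_⟩
    calc k * p * x * q = k * (p * x * q) := by simp only [mul_assoc]
      _ = k * y := by rw [← hpq]

theorem compact_monoid_is_stable_general (x y : M) :
    ((∃ m : M, x = y * m) → (∃ p q : M, y = p * x * q) →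
      {z : M | ∃ m : M, z = x * m} = {z : M | ∃ m : M, z = y * m}) ∧
    ((∃ m : M, x = m * y) → (∃ p q : M, y = p * x * q) →
      {z : M | ∃ m : M, z = m * x} = {z : M | ∃ m : M, z = m * y}) := by
  constructor <;> intro hx hy
  · simpa only [Set.range, eq_comm] using range_mul_left_eq_of_eq_mul hx hy
  · simpa only [Set.range, eq_comm] using range_mul_right_eq_of_eq_mul hx hy

end Stability

/-- Every compact monoid is stable: if `x ∈ yM` and `x`, `y` generate
the same two-sided principal ideal, then `xM = yM`; dually for left ideals. -/
theorem compact_monoid_is_stable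
    {M : Type*} [Monoid M] [TopologicalSpace M] [CompactSpace M] [T2Space M]
    [ContinuousMul M] (x y : M) :
    ((∃ m : M, x = y * m) → (∃ p q : M, x = p * y * q) → (∃ p q : M, y = p * x * q) →
      {z : M | ∃ m : M, z = x * m} = {z : M | ∃ m : M, z = y * m}) ∧
    ((∃ m : M, x = m * y) → (∃ p q : M, x = p * y * q) → (∃ p q : M, y = p * x * q) →
      {z : M | ∃ m : M, z = m * x} = {z : M | ∃ m : M, z = m * y}) :=
  ⟨fun hx _ hy ↦ (compact_monoid_is_stable_general x y).1 hx hy,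
    fun hx _ hy ↦ (compact_monoid_is_stable_general x y).2 hx hy⟩
end

section
/- Let A be a finite alphabet and let S ⊆ A^ℤ be a subshift. Then S is irreducible, i.e., there exists x ∈ S whose forward orbit {σ_A^n(x) : n ∈ ℕ} is dense in S, if and only if the language B(S) is recurrent. -/
/-- The shift map on `A^ℤ`. -/
def shiftMap (A : Type*) : (ℤ → A) → (ℤ → A) := fun x i => x (i + 1)

/-- A subshift of `A^ℤ`: a nonempty closed shift-invariant subset
(`ℤ → A` carries the product topology). -/
def IsSubshift {A : Type*} [TopologicalSpace A] (S : Set (ℤ → A)) : Prop :=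
  S.Nonempty ∧ IsClosed S ∧ shiftMap A '' S = S

/-- The map sending `x ∈ A^ℤ` to the sequence of its consecutive blocks of length `n`,
an element of `(Aⁿ)^ℤ`. -/
def higherPowerMap (A : Type*) (n : ℕ) : (ℤ → A) → (ℤ → (Fin n → A)) :=
  fun x k j => x ((n : ℤ) * k + (j : ℤ))

/-- Two subshifts are conjugate if there is an equivariant homeomorphism between them. -/
def Conjugate {A B : Type*} [TopologicalSpace A] [TopologicalSpace B]
    (S : Set (ℤ → A)) (T : Set (ℤ → B)) : Prop :=
  ∃ φ : S ≃ₜ T, ∀ (x : ℤ → A) (hx : x ∈ S) (hx' : shiftMap A x ∈ S),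
    (φ ⟨shiftMap A x, hx'⟩ : ℤ → B) = shiftMap B (φ ⟨x, hx⟩)

/-- The set of blocks (finite contiguous subwords, including the empty word) of a
bi-infinite sequence `x ∈ A^ℤ`. -/
def blocksOf {A : Type*} (x : ℤ → A) : Set (List A) :=
  {w | ∃ (n : ℕ) (i : ℤ), w = (List.range n).map fun j => x (i + (j : ℤ))}

/-- The language of blocks of a set `S ⊆ A^ℤ`. -/
def blocksOfSet {A : Type*} (S : Set (ℤ → A)) : Set (List A) :=
  {w | ∃ x ∈ S, w ∈ blocksOf x}

/-- The set of bi-infinite sequences all of whose blocks lie in `F`. -/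
def subshiftOfLang {A : Type*} (F : Set (List A)) : Set (ℤ → A) :=
  {x | blocksOf x ⊆ F}

/-! A dense forward orbit visits every cylinder arbitrarily far to the right, so any block `u` of
the subshift is followed, somewhere along that one point, by any other block `v`. Conversely,
recurrence of the language says exactly that the shift is topologically transitive: some point of
any cylinder is moved by a nonnegative power of the shift into any other cylinder. Birkhoff's
transitivity theorem, a Baire category argument, then produces a dense forward orbit. -/

section BirkhoffTransitivity

variable {X : Type*} [TopologicalSpace X] {f : X → X}

open TopologicalSpace in
theorem exists_dense_range_iterate [BaireSpace X] [SecondCountableTopology X] [Nonempty X]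
    (hf : Continuous f)
    (htrans : ∀ U V : Set X, IsOpen U → IsOpen V → U.Nonempty → V.Nonempty →
      ∃ n : ℕ, (U ∩ f^[n] ⁻¹' V).Nonempty) :
    ∃ x, Dense (Set.range fun n : ℕ => f^[n] x) := by
  have hbasis := isBasis_countableBasis X
  have hdense : Dense (⋂ V ∈ countableBasis X, ⋃ n : ℕ, f^[n] ⁻¹' V) := by
    refine dense_biInter_of_isOpen
      (fun V hV => isOpen_iUnion fun n => (hbasis.isOpen hV).preimage (hf.iterate n))
      (countable_countableBasis X) fun V hV => dense_iff_inter_open.2 fun U hU hUne => ?_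
    obtain ⟨n, x, hxU, hxV⟩ :=
      htrans U V hU (hbasis.isOpen hV) hUne (nonempty_of_mem_countableBasis hV)
    exact ⟨x, hxU, Set.mem_iUnion.2 ⟨n, hxV⟩⟩
  obtain ⟨x, hx⟩ := hdense.nonempty
  refine ⟨x, hbasis.dense_iff.2 fun V hV _ => ?_⟩
  obtain ⟨n, hn⟩ := Set.mem_iUnion.1 (Set.mem_iInter₂.1 hx V hV)
  exact ⟨f^[n] x, hn, n, rfl⟩

theorem exists_mem_subset_closure_range_iterate {S : Set X} [BaireSpace S]
    [SecondCountableTopology S] (hne : S.Nonempty) (hf : ContinuousOn f S) (hS : Set.MapsTo f S S)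
    (htrans : ∀ U V : Set X, IsOpen U → IsOpen V → (S ∩ U).Nonempty → (S ∩ V).Nonempty →
      ∃ n : ℕ, (S ∩ U ∩ f^[n] ⁻¹' V).Nonempty) :
    ∃ x ∈ S, S ⊆ closure (Set.range fun n : ℕ => f^[n] x) := by
  have := hne.to_subtype
  have iterate_coe (n : ℕ) (x : S) : ((hS.restrict f S S)^[n] x : X) = f^[n] x := by
    rw [hS.iterate_restrict, Set.MapsTo.val_restrict_apply]
  obtain ⟨x, hx⟩ : ∃ x, Dense (Set.range fun n : ℕ => (hS.restrict f S S)^[n] x) := by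
    refine exists_dense_range_iterate (hf.mapsToRestrict hS) ?_
    rintro _ _ ⟨U, hU, rfl⟩ ⟨V, hV, rfl⟩ hUne hVne
    obtain ⟨n, x, ⟨hxS, hxU⟩, hxV⟩ := htrans U V hU hV (Subtype.preimage_coe_nonempty.1 hUne)
      (Subtype.preimage_coe_nonempty.1 hVne)
    exact ⟨n, ⟨x, hxS⟩, hxU, by simpa only [Set.mem_preimage, iterate_coe] using hxV⟩
  refine ⟨x, x.2, ?_⟩
  simpa only [Subtype.dense_iff, ← Set.range_comp, Function.comp_def, iterate_coe] using hx

end BirkhoffTransitivity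

section Cylinders

variable {A : Type*} {x y : ℤ → A} {i j : ℤ} {u v w : List A}

/-- The cylinder `[w]_i` of all bi-infinite sequences that read the word `w` starting at
position `i`. Every statement about blocks is phrased through it. -/
def wordCylinder (i : ℤ) (w : List A) : Set (ℤ → A) :=
  {x | ∀ (k : ℕ) (hk : k < w.length), x (i + k) = w[k]}

/-- The block of length `n` of the bi-infinite sequence `x` starting at position `i`. -/
def blockAt (x : ℤ → A) (i : ℤ) (n : ℕ) : List A :=
  List.ofFn fun k : Fin n => x (i + k)

theorem mem_wordCylinder :
    x ∈ wordCylinder i w ↔ ∀ (k : ℕ) (hk : k < w.length), x (i + k) = w[k] :=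
  Iff.rfl

@[simp]
theorem length_blockAt (x : ℤ → A) (i : ℤ) (n : ℕ) : (blockAt x i n).length = n :=
  List.length_ofFn

theorem mem_wordCylinder_blockAt {n : ℕ} :
    y ∈ wordCylinder i (blockAt x i n) ↔ ∀ k < n, y (i + k) = x (i + k) := by
  simp [mem_wordCylinder, blockAt]

theorem self_mem_wordCylinder_blockAt (x : ℤ → A) (i : ℤ) (n : ℕ) :
    x ∈ wordCylinder i (blockAt x i n) :=
  mem_wordCylinder_blockAt.2 fun _ _ => rfl

theorem mem_wordCylinder_singleton {a : A} : x ∈ wordCylinder i [a] ↔ x i = a := by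
  simp [mem_wordCylinder]

theorem wordCylinder_append (i : ℤ) (u v : List A) :
    wordCylinder i (u ++ v) = wordCylinder i u ∩ wordCylinder (i + u.length) v := by
  ext x
  simp only [Set.mem_inter_iff, mem_wordCylinder, List.length_append]
  refine ⟨fun h => ⟨fun k hk => ?_, fun k hk => ?_⟩, fun ⟨hu, hv⟩ k hk => ?_⟩
  · rw [h k (by omega), List.getElem_append_left hk]
  · simpa [add_assoc] using h (u.length + k) (by omega)
  · rcases lt_or_ge k u.length with hku | hku
    · rw [hu k hku, List.getElem_append_left hku]
    · rw [List.getElem_append_right hku, ← hv (k - u.length) (by omega)]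
      congr 1
      omega

theorem isOpen_wordCylinder [TopologicalSpace A] [DiscreteTopology A] (i : ℤ) (w : List A) :
    IsOpen (wordCylinder i w) := by
  have h : wordCylinder i w =
      ⋂ k : Fin w.length, (fun x : ℤ → A => x (i + (k : ℕ))) ⁻¹' {w[k]} := by
    ext x
    simp [mem_wordCylinder, Fin.forall_iff]
  rw [h]
  exact isOpen_iInter_of_finite fun k => (isOpen_discrete _).preimage (continuous_apply _)

theorem exists_wordCylinder_subset_of_isOpen [TopologicalSpace A] {U : Set (ℤ → A)}
    (hU : IsOpen U) (hx : x ∈ U) : ∃ i w, x ∈ wordCylinder i w ∧ wordCylinder i w ⊆ U := by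
  obtain ⟨I, t, ht, htU⟩ := isOpen_pi_iff.1 hU x hx
  set N : ℕ := I.sup Int.natAbs
  refine ⟨-N, blockAt x (-N) (2 * N + 1), self_mem_wordCylinder_blockAt x _ _,
    fun y hy => htU fun m hm => ?_⟩
  have hmN : m.natAbs ≤ N := Finset.le_sup (f := Int.natAbs) hm
  have hyx := mem_wordCylinder_blockAt.1 hy (m + N).toNat (by omega)
  rw [show -(N : ℤ) + (m + N).toNat = m by omega] at hyx
  exact hyx ▸ (ht m hm).2

end Cylinders

section Shift

variable {A : Type*} {S : Set (ℤ → A)}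

theorem continuous_shiftMap [TopologicalSpace A] : Continuous (shiftMap A) :=
  continuous_pi fun i => continuous_apply (i + 1)

theorem iterate_shiftMap_apply (n : ℕ) (x : ℤ → A) (i : ℤ) :
    (shiftMap A)^[n] x i = x (i + n) := by
  induction n generalizing x with
  | zero => simp
  | succ n ih => rw [Function.iterate_succ_apply, ih, shiftMap, Nat.cast_succ, add_assoc]

theorem preimage_iterate_shiftMap_wordCylinder (n : ℕ) (i : ℤ) (w : List A) :
    (shiftMap A)^[n] ⁻¹' wordCylinder i w = wordCylinder (i + n) w := by
  ext x
  simp only [Set.mem_preimage, mem_wordCylinder, iterate_shiftMap_apply, add_right_comm]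

theorem nonempty_inter_wordCylinder_add_one_iff (hS : shiftMap A '' S = S) (i : ℤ) (w : List A) :
    (S ∩ wordCylinder (i + 1) w).Nonempty ↔ (S ∩ wordCylinder i w).Nonempty := by
  have hpre : wordCylinder (i + 1) w = shiftMap A ⁻¹' wordCylinder i w :=
    (preimage_iterate_shiftMap_wordCylinder 1 i w).symm
  conv_rhs => rw [← hS]
  rw [hpre, ← Set.image_inter_preimage, Set.image_nonempty]

theorem nonempty_inter_wordCylinder_congr (hS : shiftMap A '' S = S) (i j : ℤ) (w : List A) :
    (S ∩ wordCylinder i w).Nonempty ↔ (S ∩ wordCylinder j w).Nonempty := by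
  induction i using Int.inductionOn' (b := j) with
  | zero => rfl
  | succ k _ ih => rw [nonempty_inter_wordCylinder_add_one_iff hS, ih]
  | pred k _ ih => rw [← nonempty_inter_wordCylinder_add_one_iff hS, sub_add_cancel, ih]

end Shift

section Language

variable {A : Type*} {S : Set (ℤ → A)} {w : List A}

theorem exists_eq_blockAt_iff {x : ℤ → A} {i : ℤ} :
    (∃ n, w = blockAt x i n) ↔ x ∈ wordCylinder i w := by
  refine ⟨?_, fun h => ⟨w.length, List.ext_getElem (by simp) fun k hk _ => ?_⟩⟩
  · rintro ⟨n, rfl⟩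
    exact self_mem_wordCylinder_blockAt x i n
  · simpa [blockAt] using (h k hk).symm

theorem mem_blocksOf_iff {x : ℤ → A} : w ∈ blocksOf x ↔ ∃ i, x ∈ wordCylinder i w := by
  -- In `blocksOf` the list `List.range n` is coerced to a `List ℤ` through the list monad.
  have blockAt_eq (n : ℕ) (i : ℤ) :
      ((List.range n).map fun j => x (i + (j : ℤ))) = blockAt x i n :=
    List.ext_getElem (by simp [← List.map_eq_flatMap]) (by simp [← List.map_eq_flatMap, blockAt])
  simp only [blocksOf, blockAt_eq, Set.mem_ofPred_eq, ← exists_eq_blockAt_iff]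
  exact exists_comm

theorem mem_blocksOfSet_iff : w ∈ blocksOfSet S ↔ ∃ i, (S ∩ wordCylinder i w).Nonempty := by
  simp only [blocksOfSet, Set.mem_ofPred_eq, mem_blocksOf_iff, ← exists_and_left]
  exact exists_comm

theorem mem_blocksOfSet_iff_of_image_shiftMap_eq (hS : shiftMap A '' S = S) (i : ℤ) :
    w ∈ blocksOfSet S ↔ (S ∩ wordCylinder i w).Nonempty :=
  mem_blocksOfSet_iff.trans
    ⟨fun ⟨j, hj⟩ => (nonempty_inter_wordCylinder_congr hS j i w).1 hj, fun h => ⟨i, h⟩⟩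

theorem blocksOfSet_nonempty (hS : S.Nonempty) : (blocksOfSet S).Nonempty := by
  obtain ⟨x, hx⟩ := hS
  exact ⟨blockAt x 0 0, mem_blocksOfSet_iff.2 ⟨0, x, hx, self_mem_wordCylinder_blockAt x 0 0⟩⟩

theorem factorial_blocksOfSet (S : Set (ℤ → A)) : Factorial (blocksOfSet S) := by
  rintro u _ hw ⟨s, t, rfl⟩
  obtain ⟨i, x, hx, hxw⟩ := mem_blocksOfSet_iff.1 hw
  simp only [wordCylinder_append, Set.mem_inter_iff] at hxw
  exact mem_blocksOfSet_iff.2 ⟨i + s.length, x, hx, hxw.1.2⟩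

theorem prolongable_blocksOfSet (S : Set (ℤ → A)) : Prolongable (blocksOfSet S) := by
  intro u hu
  obtain ⟨i, x, hx, hxu⟩ := mem_blocksOfSet_iff.1 hu
  refine ⟨x (i - 1), x (i + u.length), mem_blocksOfSet_iff.2 ⟨i - 1, x, hx, ?_⟩,
    mem_blocksOfSet_iff.2 ⟨i, x, hx, ?_⟩⟩
  · rw [← List.singleton_append, wordCylinder_append]
    exact ⟨mem_wordCylinder_singleton.2 rfl, by simpa using hxu⟩
  · rw [wordCylinder_append]
    exact ⟨hxu, mem_wordCylinder_singleton.2 rfl⟩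

theorem subshiftLanguage_blocksOfSet (hS : S.Nonempty) : SubshiftLanguage (blocksOfSet S) :=
  ⟨blocksOfSet_nonempty hS, factorial_blocksOfSet S, prolongable_blocksOfSet S⟩

theorem exists_iterate_shiftMap_mem_wordCylinder (hS : shiftMap A '' S = S)
    (hrec : Recurrent (blocksOfSet S)) {i j : ℤ} {u v : List A}
    (hu : (S ∩ wordCylinder i u).Nonempty) (hv : (S ∩ wordCylinder j v).Nonempty) :
    ∃ n : ℕ, (S ∩ wordCylinder i u ∩ (shiftMap A)^[n] ⁻¹' wordCylinder j v).Nonempty := by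
  obtain ⟨y, hyS, hyu⟩ := hu
  -- Prolonging `u` by `t` beyond position `j` makes `v` occur to the right of `j`.
  set t := blockAt y (i + u.length) (j - i).toNat with ht
  have hut : u ++ t ∈ blocksOfSet S := mem_blocksOfSet_iff.2 ⟨i, y, hyS, by
    rw [wordCylinder_append]
    exact ⟨hyu, self_mem_wordCylinder_blockAt y _ _⟩⟩
  obtain ⟨w, hw⟩ := hrec.2 (u ++ t) hut v (mem_blocksOfSet_iff.2 ⟨j, hv⟩)
  obtain ⟨x, hxS, hx⟩ := (mem_blocksOfSet_iff_of_image_shiftMap_eq hS i).1 hw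
  rw [wordCylinder_append _ (u ++ t ++ w), wordCylinder_append _ (u ++ t),
    wordCylinder_append _ u] at hx
  obtain ⟨⟨⟨hxu, -⟩, -⟩, hxv⟩ := hx
  have hj : j ≤ i + (u ++ t ++ w).length := by
    simp only [List.length_append, ht, length_blockAt]
    omega
  obtain ⟨n, hn⟩ := Int.le.dest hj
  refine ⟨n, x, ⟨hxS, hxu⟩, ?_⟩
  rwa [preimage_iterate_shiftMap_wordCylinder, hn]

end Language

section Irreducibility

variable {A : Type*} [TopologicalSpace A] [DiscreteTopology A] {S : Set (ℤ → A)}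

theorem exists_ge_mem_wordCylinder_of_dense_orbit (hS : shiftMap A '' S = S) {x : ℤ → A}
    (hdense : S ⊆ closure (Set.range fun n : ℕ => (shiftMap A)^[n] x)) {w : List A}
    (hw : w ∈ blocksOfSet S) (k : ℤ) : ∃ p ≥ k, x ∈ wordCylinder p w := by
  obtain ⟨y, hyS, hyw⟩ := (mem_blocksOfSet_iff_of_image_shiftMap_eq hS k).1 hw
  obtain ⟨_, hn, n, rfl⟩ := mem_closure_iff.1 (hdense hyS) _ (isOpen_wordCylinder k w) hyw
  refine ⟨k + n, by omega, ?_⟩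
  rwa [← preimage_iterate_shiftMap_wordCylinder]

theorem recurrent_blocksOfSet_of_dense_orbit (hS : shiftMap A '' S = S) {x : ℤ → A} (hx : x ∈ S)
    (hdense : S ⊆ closure (Set.range fun n : ℕ => (shiftMap A)^[n] x)) :
    Recurrent (blocksOfSet S) := by
  refine ⟨subshiftLanguage_blocksOfSet ⟨x, hx⟩, fun u hu v hv => ?_⟩
  obtain ⟨p, -, hxu⟩ := exists_ge_mem_wordCylinder_of_dense_orbit hS hdense hu 0
  obtain ⟨q, hq, hxv⟩ := exists_ge_mem_wordCylinder_of_dense_orbit hS hdense hv (p + u.length)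
  obtain ⟨n, rfl⟩ := Int.le.dest hq
  refine ⟨blockAt x (p + u.length) n, mem_blocksOfSet_iff.2 ⟨p, x, hx, ?_⟩⟩
  simp only [wordCylinder_append, List.length_append, length_blockAt, Nat.cast_add, ← add_assoc]
  exact ⟨⟨hxu, self_mem_wordCylinder_blockAt x _ n⟩, hxv⟩

theorem exists_dense_orbit_of_recurrent_blocksOfSet [Countable A] (hS : IsSubshift S)
    (hrec : Recurrent (blocksOfSet S)) :
    ∃ x ∈ S, S ⊆ closure (Set.range fun n : ℕ => (shiftMap A)^[n] x) := by
  obtain ⟨hne, hclosed, hshift⟩ := hS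
  have := hclosed.isCompletelyMetrizableSpace
  refine exists_mem_subset_closure_range_iterate hne continuous_shiftMap.continuousOn
    (Set.mapsTo_iff_image_subset.2 hshift.subset) ?_
  rintro U V hU hV ⟨y, hyS, hyU⟩ ⟨z, hzS, hzV⟩
  obtain ⟨i, u, hyu, huU⟩ := exists_wordCylinder_subset_of_isOpen hU hyU
  obtain ⟨j, v, hzv, hvV⟩ := exists_wordCylinder_subset_of_isOpen hV hzV
  obtain ⟨n, hn⟩ :=
    exists_iterate_shiftMap_mem_wordCylinder hshift hrec ⟨y, hyS, hyu⟩ ⟨z, hzS, hzv⟩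
  exact ⟨n, hn.mono (Set.inter_subset_inter (Set.inter_subset_inter_right S huU)
    (Set.preimage_mono hvV))⟩

theorem irreducible_iff_blocks_recurrent_general [Countable A] (S : Set (ℤ → A))
    (hS : IsSubshift S) :
    (∃ x ∈ S, S ⊆ closure {y : ℤ → A | ∃ n : ℕ, y = (shiftMap A)^[n] x}) ↔
      Recurrent (blocksOfSet S) := by
  have orbit_eq_range (x : ℤ → A) :
      {y : ℤ → A | ∃ n : ℕ, y = (shiftMap A)^[n] x} = Set.range fun n => (shiftMap A)^[n] x :=
    Set.ext fun _ => exists_congr fun _ => eq_comm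
  simp only [orbit_eq_range]
  exact ⟨fun ⟨_, hx, hdense⟩ => recurrent_blocksOfSet_of_dense_orbit hS.2.2 hx hdense,
    exists_dense_orbit_of_recurrent_blocksOfSet hS⟩

end Irreducibility

/-- A subshift `S` is irreducible (has a dense forward orbit)
iff its language of blocks is recurrent. -/
theorem irreducible_iff_blocks_recurrent
    {A : Type*} [Fintype A] [TopologicalSpace A] [DiscreteTopology A]
    (S : Set (ℤ → A)) (hS : IsSubshift S) :
    (∃ x ∈ S, S ⊆ closure {y : ℤ → A | ∃ n : ℕ, y = (shiftMap A)^[n] x}) ↔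
      Recurrent (blocksOfSet S) :=
  irreducible_iff_blocks_recurrent_general S hS
end

section
/- Let A be a finite alphabet with at least two letters and let φ be a primitive substitution over A. Then the language F_φ of factors of the words φᵏ(a) (k ∈ ℕ, a ∈ A) is uniformly recurrent. -/
/-!
Primitivity makes every word `u` of the language of `φ` a factor of `φ^[N] [a]` for *all* letters
`a` at once, as soon as `N` is large. Fix such an `N`. A long word of the language is a factor of
some `φ^[N] v`, a concatenation of blocks `φ^[N] [b]` of bounded length, so if it is more than twice
as long as the longest block then it contains an entire block, and with it `u`. For prolongability,
`u` occurs in both halves of `φ^[N] [x, y] = φ^[N] [x] ++ φ^[N] [y]`, where `[x, y]` is any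
two-letter word of the language; its occurrence in the right half extends to the left, and vice
versa.
-/

open Filter

section Words

variable {A : Type*} {u x y : List A}

lemma exists_cons_infix_append (hx : x ≠ []) (hu : u <:+: y) : ∃ a, a :: u <:+: x ++ y := by
  obtain ⟨p, q, rfl⟩ := hu
  have hxp : x ++ p ≠ [] := by simp [hx]
  obtain ⟨s, a, hsa⟩ := (x ++ p).eq_nil_or_concat'.resolve_left hxp
  refine ⟨a, s, q, ?_⟩
  calc s ++ a :: u ++ q = (s ++ [a]) ++ u ++ q := by simp
    _ = x ++ (p ++ u ++ q) := by simp only [← hsa, List.append_assoc]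

lemma exists_concat_infix_append (hu : u <:+: x) (hy : y ≠ []) : ∃ b, u ++ [b] <:+: x ++ y := by
  obtain ⟨p, q, rfl⟩ := hu
  have hqy : q ++ y ≠ [] := by simp [hy]
  obtain ⟨b, r, hbr⟩ := List.exists_cons_of_ne_nil hqy
  refine ⟨b, p, r, ?_⟩
  calc p ++ (u ++ [b]) ++ r = p ++ u ++ b :: r := by simp
    _ = p ++ u ++ q ++ y := by simp [← hbr]

lemma exists_pair_infix_of_ne {l : List A} {c d : A} (hc : c ∈ l) (hd : d ∈ l) (hcd : c ≠ d) :
    ∃ a b, [a, b] <:+: l := by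
  match l with
  | [_] => exact absurd ((List.mem_singleton.1 hc).trans (List.mem_singleton.1 hd).symm) hcd
  | a :: b :: r => exact ⟨a, b, (List.prefix_append [a, b] r).isInfix⟩

end Words

/-- A monoid homomorphism `A* → B*`, as a predicate on functions between words. -/
structure IsWordHom {A B : Type*} (f : List A → List B) : Prop where
  map_nil : f [] = []
  map_append (u v : List A) : f (u ++ v) = f u ++ f v

namespace IsWordHom

variable {A B : Type*} {f : List A → List B}

lemma map_cons (hf : IsWordHom f) (a : A) (u : List A) : f (a :: u) = f [a] ++ f u :=
  hf.map_append [a] u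

lemma infix_map (hf : IsWordHom f) {u v : List A} (h : u <:+: v) : f u <:+: f v := by
  obtain ⟨p, q, rfl⟩ := h
  exact ⟨f p, f q, by simp only [hf.map_append]⟩

lemma iterate {φ : List A → List A} (hφ : IsWordHom φ) (n : ℕ) : IsWordHom φ^[n] where
  map_nil := Function.iterate_fixed hφ.map_nil n
  map_append u v := by
    induction n with
    | zero => rfl
    | succ n ih => simp only [Function.iterate_succ_apply', ih, hφ.map_append]

lemma exists_map_singleton_prefix (hf : IsWordHom f) {M : ℕ} (hM : ∀ a, (f [a]).length ≤ M)
    {v : List A} {w : List B} (hw : w <+: f v) (hlen : M < w.length) : ∃ a, f [a] <+: w := by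
  cases v with
  | nil =>
    rw [hf.map_nil, List.prefix_nil] at hw
    simp [hw] at hlen
  | cons a v =>
    have ha : f [a] <+: f (a :: v) := hf.map_cons a v ▸ List.prefix_append _ _
    exact ⟨a, List.prefix_of_prefix_length_le ha hw ((hM a).trans hlen.le)⟩

lemma exists_map_singleton_infix (hf : IsWordHom f) {M : ℕ} (hM : ∀ a, (f [a]).length ≤ M)
    {v : List A} {w : List B} (hw : w <:+: f v) (hlen : 2 * M < w.length) :
    ∃ a, f [a] <:+: w := by
  induction v with
  | nil =>
    rw [hf.map_nil, List.infix_nil] at hw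
    simp [hw] at hlen
  | cons a v ih =>
    have ha := hM a
    rw [hf.map_cons] at hw
    rcases List.infix_append_iff.1 hw with hwa | hwv | ⟨s, t, rfl, hs, ht⟩
    · have := hwa.length_le
      omega
    · exact ih hwv
    · have hsM : s.length ≤ M := hs.length_le.trans ha
      have htM : M < t.length := by
        rw [List.length_append] at hlen
        omega
      obtain ⟨b, hb⟩ := hf.exists_map_singleton_prefix hM ht htM
      exact ⟨b, hb.isInfix.trans (List.suffix_append s t).isInfix⟩

end IsWordHom

/-- The language `F_φ` of factors of the words `φᵏ(a)`. -/
def substitutionLanguage {A : Type*} (φ : List A → List A) : Set (List A) :=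
  {w | ∃ (k : ℕ) (a : A), w <:+: φ^[k] [a]}

/-- A primitive substitution: an endomorphism of `A*` with a power under which the image of every
letter contains every letter. -/
structure IsPrimitiveSubstitution {A : Type*} (φ : List A → List A) : Prop extends IsWordHom φ where
  exists_singleton_infix_iterate : ∃ n : ℕ, 1 ≤ n ∧ ∀ a b : A, [b] <:+: φ^[n] [a]

section SubstitutionLanguage

variable {A : Type*} {φ : List A → List A}

lemma substitutionLanguage_nonempty [Nonempty A] (φ : List A → List A) :
    (substitutionLanguage φ).Nonempty :=
  ⟨[Classical.arbitrary A], 0, Classical.arbitrary A, List.infix_rfl⟩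

lemma factorial_substitutionLanguage (φ : List A → List A) : Factorial (substitutionLanguage φ) :=
  fun _ _ ⟨k, a, hw⟩ hu => ⟨k, a, hu.trans hw⟩

lemma IsWordHom.iterate_mem_substitutionLanguage (hφ : IsWordHom φ) (n : ℕ) {u : List A}
    (hu : u ∈ substitutionLanguage φ) : φ^[n] u ∈ substitutionLanguage φ := by
  obtain ⟨k, a, hu⟩ := hu
  refine ⟨n + k, a, ?_⟩
  rw [Function.iterate_add_apply]
  exact (hφ.iterate n).infix_map hu

namespace IsPrimitiveSubstitution

lemma map_ne_nil (hφ : IsPrimitiveSubstitution φ) {u : List A} (hu : u ≠ []) : φ u ≠ [] := by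
  intro h
  obtain ⟨_ | n, hn, hprim⟩ := hφ.exists_singleton_infix_iterate
  · exact absurd hn (by decide)
  obtain ⟨a, v, rfl⟩ := List.exists_cons_of_ne_nil hu
  have ha : [a] <:+: φ^[n + 1] (a :: v) :=
    (hprim a a).trans ((hφ.iterate (n + 1)).infix_map (List.prefix_append [a] v).isInfix)
  rw [Function.iterate_succ_apply, h, (hφ.iterate n).map_nil] at ha
  exact List.cons_ne_nil a [] (List.infix_nil.1 ha)

lemma iterate_ne_nil (hφ : IsPrimitiveSubstitution φ) (n : ℕ) {u : List A} (hu : u ≠ []) :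
    φ^[n] u ≠ [] := by
  induction n with
  | zero => exact hu
  | succ n ih =>
    rw [Function.iterate_succ_apply']
    exact hφ.map_ne_nil ih

lemma eventually_infix_iterate (hφ : IsPrimitiveSubstitution φ) {u : List A}
    (hu : u ∈ substitutionLanguage φ) : ∀ᶠ N in atTop, ∀ a, u <:+: φ^[N] [a] := by
  obtain ⟨k, b, hb⟩ := hu
  obtain ⟨n, -, hprim⟩ := hφ.exists_singleton_infix_iterate
  filter_upwards [eventually_ge_atTop (k + n)] with N hN a
  obtain ⟨m, rfl⟩ := Nat.exists_eq_add_of_le hN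
  obtain ⟨c, v, hcv⟩ :=
    List.exists_cons_of_ne_nil (hφ.iterate_ne_nil m (List.cons_ne_nil a []))
  have hbc : [b] <:+: φ^[n] (c :: v) :=
    (hprim c b).trans ((hφ.iterate n).infix_map (List.prefix_append [c] v).isInfix)
  rw [Function.iterate_add_apply, Function.iterate_add_apply, hcv]
  exact hb.trans ((hφ.iterate k).infix_map hbc)

lemma exists_pair_mem_substitutionLanguage [Nontrivial A] (hφ : IsPrimitiveSubstitution φ) :
    ∃ x y, [x, y] ∈ substitutionLanguage φ := by
  obtain ⟨n, -, hprim⟩ := hφ.exists_singleton_infix_iterate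
  obtain ⟨c, d, hcd⟩ := exists_pair_ne A
  have hmem (b : A) : b ∈ φ^[n] [c] := (List.singleton_infix_iff b _).1 (hprim c b)
  obtain ⟨x, y, hxy⟩ := exists_pair_infix_of_ne (hmem c) (hmem d) hcd
  exact ⟨x, y, n, c, hxy⟩

lemma prolongable_of_pair_mem (hφ : IsPrimitiveSubstitution φ) {x y : A}
    (hxy : [x, y] ∈ substitutionLanguage φ) : Prolongable (substitutionLanguage φ) := by
  intro u hu
  obtain ⟨N, hN⟩ := (hφ.eventually_infix_iterate hu).exists
  have hmem : φ^[N] [x] ++ φ^[N] [y] ∈ substitutionLanguage φ :=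
    (hφ.iterate N).map_cons x [y] ▸ hφ.iterate_mem_substitutionLanguage N hxy
  have hne (a : A) : φ^[N] [a] ≠ [] := hφ.iterate_ne_nil N (List.cons_ne_nil a [])
  obtain ⟨a, ha⟩ := exists_cons_infix_append (hne x) (hN y)
  obtain ⟨b, hb⟩ := exists_concat_infix_append (hN x) (hne y)
  exact ⟨a, b, factorial_substitutionLanguage φ _ _ hmem ha,
    factorial_substitutionLanguage φ _ _ hmem hb⟩

lemma exists_forall_length_le_infix [Finite A] (hφ : IsPrimitiveSubstitution φ) {u : List A}
    (hu : u ∈ substitutionLanguage φ) :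
    ∃ L : ℕ, ∀ w ∈ substitutionLanguage φ, L ≤ w.length → u <:+: w := by
  obtain ⟨N, hN⟩ := (hφ.eventually_infix_iterate hu).exists
  obtain ⟨M, hM⟩ := Finite.exists_le fun a => (φ^[N] [a]).length
  refine ⟨2 * M + 1, fun w hw hlen => ?_⟩
  obtain ⟨v, hwv⟩ : ∃ v, w <:+: φ^[N] v := by
    obtain ⟨K, hK, hNK⟩ :=
      ((hφ.eventually_infix_iterate hw).and (eventually_ge_atTop N)).exists
    obtain ⟨m, rfl⟩ := Nat.exists_eq_add_of_le hNK
    obtain ⟨-, e, -⟩ := hw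
    exact ⟨φ^[m] [e], Function.iterate_add_apply φ N m [e] ▸ hK e⟩
  obtain ⟨b, hb⟩ := (hφ.iterate N).exists_map_singleton_infix hM hwv hlen
  exact (hN b).trans hb

end IsPrimitiveSubstitution

end SubstitutionLanguage

/-- The language of factors of `φᵏ(a)` for a primitive substitution
`φ` over an alphabet with at least two letters is uniformly recurrent. -/
theorem primitive_substitution_language_uniformly_recurrent
    {A : Type*} [Fintype A] (hA : 1 < Fintype.card A)
    (φ : List A → List A)
    (hhom : ∀ u v : List A, φ (u ++ v) = φ u ++ φ v) (hnil : φ [] = [])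
    (hprim : ∃ n : ℕ, 1 ≤ n ∧ ∀ a b : A, [b] <:+: φ^[n] [a]) :
    UniformlyRecurrent {w : List A | ∃ (k : ℕ) (a : A), w <:+: φ^[k] [a]} := by
  have : Nontrivial A := Fintype.one_lt_card_iff_nontrivial.1 hA
  have hφ : IsPrimitiveSubstitution φ := ⟨⟨hnil, hhom⟩, hprim⟩
  obtain ⟨x, y, hxy⟩ := hφ.exists_pair_mem_substitutionLanguage
  have hsub : SubshiftLanguage (substitutionLanguage φ) :=
    ⟨substitutionLanguage_nonempty φ, factorial_substitutionLanguage φ,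
      hφ.prolongable_of_pair_mem hxy⟩
  exact ⟨hsub, fun _ hu => hφ.exists_forall_length_le_infix hu⟩
end
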